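/- Let g_{k,s}(x) = e^{-(x−s)²/2 + i k x}, let M = B = √N/(2√2), and let Ω = {(k,s) : |k| ≤ B, |s| ≤ 2M}. Then there is an absolute constant C > 0 such that for all N ≥ 1, ∫_Ω ‖g_{k,s} − Π̂_N g_{k,s}‖² dk ds ≤ C N^{-1/2} e^{-N/8}, where ‖·‖ is the L²(ℝ) norm. -/

import Mathlib

open MeasureTheory Real
noncomputable section
def physHermite : ℕ → ℝ → ℝ
  | 0 => fun _ => 1
  | 1 => fun x => 2 * x
  | n + 2 => fun x => 2 * x * physHermite (n + 1) x - 2 * (n + 1) * physHermite n x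
def hermiteFun (n : ℕ) (x : ℝ) : ℝ :=
  (Real.sqrt (Real.sqrt Real.pi))⁻¹ * (Real.sqrt (2 ^ n * Nat.factorial n))⁻¹ *
    Real.exp (-x ^ 2 / 2) * physHermite n x
def L2norm {E : Type*} [NormedAddCommGroup E] (f : ℝ → E) : ℝ :=
  Real.sqrt (∫ x : ℝ, ‖f x‖ ^ 2)
def scaledHermite (β : ℝ) (n : ℕ) (x : ℝ) : ℝ :=
  Real.sqrt β * hermiteFun n (β * x)
def hermiteProj (β : ℝ) (N : ℕ) (u : ℝ → ℂ) (x : ℝ) : ℂ :=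
  ∑ n ∈ Finset.range (N + 1),
    (∫ y : ℝ, u y * (scaledHermite β n y : ℂ)) * (scaledHermite β n x : ℂ)
def gks (k s : ℝ) (x : ℝ) : ℂ :=
  Complex.exp (-((x : ℂ) - (s : ℂ)) ^ 2 / 2 + Complex.I * (k : ℂ) * (x : ℂ))

/-!
By orthonormality of the Hermite functions, the squared projection error of `u` is
`‖u‖² - ∑_{n ≤ N} |⟨u, Ĥ_n⟩|²`. Repeated integration by parts against
`d/dy (H_n e^{-y²}) = -H_{n+1} e^{-y²}` gives `∫ e^{zy} H_n(y) e^{-y²} dy = √π zⁿ e^{z²/4}`, and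
for `z = s + ik` this shows that `|⟨g_{k,s}, Ĥ_n⟩|²` is `√π` times the weight at `n` of the
Poisson distribution of mean `l = (s² + k²)/2`. Since `‖g_{k,s}‖² = √π`, the squared error is `√π`
times a Poisson tail, which the Chernoff bound with ratio `2` estimates by `√π e^l / 2^{N+1}`. On
`Ω` one has `l ≤ 5N/16`, and `log 2 > 11/16` makes the squared error at most `e^{-3N/8}`, while
`|Ω| = N`.
-/

section Bessel

variable {𝕜 E ι : Type*} [RCLike 𝕜] [SeminormedAddCommGroup E] [InnerProductSpace 𝕜 E]

theorem norm_sum_smul_sq_of_orthonormal {v : ι → E} (hv : Orthonormal 𝕜 v) (c : ι → 𝕜)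
    (s : Finset ι) : ‖∑ i ∈ s, c i • v i‖ ^ 2 = ∑ i ∈ s, ‖c i‖ ^ 2 := by
  rw [← RCLike.ofReal_inj (K := 𝕜), RCLike.ofReal_pow, ← inner_self_eq_norm_sq_to_K (𝕜 := 𝕜),
    hv.inner_sum]
  simp [RCLike.conj_mul]

theorem norm_sub_sum_inner_smul_sq_of_orthonormal {v : ι → E} (hv : Orthonormal 𝕜 v) (x : E)
    (s : Finset ι) :
    ‖x - ∑ i ∈ s, inner 𝕜 (v i) x • v i‖ ^ 2 = ‖x‖ ^ 2 - ∑ i ∈ s, ‖inner 𝕜 (v i) x‖ ^ 2 := by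
  have inner_proj : inner 𝕜 x (∑ i ∈ s, inner 𝕜 (v i) x • v i)
      = ((∑ i ∈ s, ‖inner 𝕜 (v i) x‖ ^ 2 : ℝ) : 𝕜) := by
    rw [inner_sum, RCLike.ofReal_sum]
    refine Finset.sum_congr rfl fun i _ => ?_
    rw [inner_smul_right, ← inner_conj_symm x, RCLike.mul_conj, RCLike.ofReal_pow]
  rw [norm_sub_sq (𝕜 := 𝕜), inner_proj, RCLike.ofReal_re, norm_sum_smul_sq_of_orthonormal hv]
  ring

end Bessel

section LTwo

variable {α 𝕜 : Type*} [MeasurableSpace α] {μ : Measure α} [RCLike 𝕜]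

theorem inner_toLp_toLp {E : Type*} [NormedAddCommGroup E] [InnerProductSpace 𝕜 E] {f g : α → E}
    (hf : MemLp f 2 μ) (hg : MemLp g 2 μ) :
    inner 𝕜 (hf.toLp f) (hg.toLp g) = ∫ a, inner 𝕜 (f a) (g a) ∂μ := by
  rw [L2.inner_def]
  refine integral_congr_ae ?_
  filter_upwards [hf.coeFn_toLp, hg.coeFn_toLp] with a hfa hga
  rw [hfa, hga]

theorem L2norm_eq_norm_toLp {E : Type*} [NormedAddCommGroup E] {f : ℝ → E}
    (hf : MemLp f 2 volume) : L2norm f = ‖hf.toLp f‖ := by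
  rw [Lp.norm_toLp, hf.eLpNorm_eq_integral_rpow_norm two_ne_zero ENNReal.ofNat_ne_top,
    ENNReal.toReal_ofReal (by positivity), L2norm, Real.sqrt_eq_rpow]
  simp

theorem L2norm_sq {E : Type*} [NormedAddCommGroup E] (f : ℝ → E) :
    L2norm f ^ 2 = ∫ x, ‖f x‖ ^ 2 :=
  Real.sq_sqrt (integral_nonneg fun _ => by positivity)

theorem toLp_sub_sum_smul {ι : Type*} {p : ENNReal} {u : α → 𝕜} {h : ι → α → 𝕜}
    (hu : MemLp u p μ) (hh : ∀ i, MemLp (h i) p μ) (c : ι → 𝕜) (s : Finset ι)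
    (hsub : MemLp (fun x => u x - ∑ i ∈ s, c i * h i x) p μ) :
    hsub.toLp _ = hu.toLp u - ∑ i ∈ s, c i • (hh i).toLp (h i) := by
  refine Lp.ext ?_
  have hsmul : ∀ᵐ x ∂μ, ∀ i ∈ s, (c i • (hh i).toLp (h i)) x = c i * h i x := by
    rw [Filter.eventually_all_finset]
    intro i _
    filter_upwards [Lp.coeFn_smul (c i) ((hh i).toLp (h i)), (hh i).coeFn_toLp] with x hx hhx
    rw [hx, Pi.smul_apply, hhx, smul_eq_mul]
  filter_upwards [hsub.coeFn_toLp, hu.coeFn_toLp, hsmul, Lp.coeFn_sub (hu.toLp u) _,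
    Lp.coeFn_finsetSum s fun i => c i • (hh i).toLp (h i)] with x hx hux hsx hdiff hsum
  rw [hx, hdiff, Pi.sub_apply, hux, hsum, Finset.sum_apply, Finset.sum_congr rfl hsx]

theorem L2norm_sub_sum_inner_mul_sq_of_orthonormal {ι : Type*} [DecidableEq ι] {u : ℝ → 𝕜}
    {h : ι → ℝ → 𝕜} (hu : MemLp u 2 volume) (hh : ∀ i, MemLp (h i) 2 volume)
    (orth : ∀ i j, ∫ x, inner 𝕜 (h i x) (h j x) = if i = j then 1 else 0) (s : Finset ι) :
    L2norm (fun x => u x - ∑ i ∈ s, (∫ y, inner 𝕜 (h i y) (u y)) * h i x) ^ 2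
      = L2norm u ^ 2 - ∑ i ∈ s, ‖∫ y, inner 𝕜 (h i y) (u y)‖ ^ 2 := by
  have orthonormal : Orthonormal 𝕜 fun i => (hh i).toLp (h i) :=
    orthonormal_iff_ite.2 fun i j => by rw [inner_toLp_toLp, orth]
  have hsub : MemLp (fun x => u x - ∑ i ∈ s, (∫ y, inner 𝕜 (h i y) (u y)) * h i x) 2 volume :=
    hu.sub (memLp_finsetSum s fun i _ => (hh i).const_mul _)
  rw [L2norm_eq_norm_toLp hsub, L2norm_eq_norm_toLp hu, toLp_sub_sum_smul hu hh]
  simpa only [inner_toLp_toLp] using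
    norm_sub_sum_inner_smul_sq_of_orthonormal orthonormal (hu.toLp u) s

end LTwo

theorem gaussian_half_mul_self (y : ℝ) :
    Complex.exp (-(y : ℂ) ^ 2 / 2) * Complex.exp (-(y : ℂ) ^ 2 / 2)
      = Complex.exp (-(y : ℂ) ^ 2) := by
  rw [← Complex.exp_add, add_halves]

/-- Continuous functions bounded by a multiple of some `exp (a * |y|)`. The class contains
exponentials and polynomials, is closed under products, and is integrable against Gaussians. -/
structure HasExpGrowth (f : ℝ → ℂ) : Prop where
  continuous : Continuous f
  exists_norm_le : ∃ C a : ℝ, ∀ y, ‖f y‖ ≤ C * Real.exp (a * |y|)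

namespace HasExpGrowth

variable {f g : ℝ → ℂ}

theorem mul (hf : HasExpGrowth f) (hg : HasExpGrowth g) : HasExpGrowth fun y => f y * g y := by
  obtain ⟨C, a, hfC⟩ := hf.exists_norm_le
  obtain ⟨D, b, hgD⟩ := hg.exists_norm_le
  refine ⟨hf.continuous.mul hg.continuous, C * D, a + b, fun y => ?_⟩
  calc ‖f y * g y‖ ≤ (C * Real.exp (a * |y|)) * (D * Real.exp (b * |y|)) :=
        norm_mul_le_of_le (hfC y) (hgD y)
    _ = C * D * Real.exp ((a + b) * |y|) := by rw [add_mul, Real.exp_add]; ring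

theorem sub (hf : HasExpGrowth f) (hg : HasExpGrowth g) : HasExpGrowth fun y => f y - g y := by
  obtain ⟨C, a, hfC⟩ := hf.exists_norm_le
  obtain ⟨D, b, hgD⟩ := hg.exists_norm_le
  have hC : 0 ≤ C := by simpa using (norm_nonneg _).trans (hfC 0)
  have hD : 0 ≤ D := by simpa using (norm_nonneg _).trans (hgD 0)
  refine ⟨hf.continuous.sub hg.continuous, C + D, max a b, fun y => ?_⟩
  calc ‖f y - g y‖ ≤ C * Real.exp (a * |y|) + D * Real.exp (b * |y|) :=
        norm_sub_le_of_le (hfC y) (hgD y)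
    _ ≤ C * Real.exp (max a b * |y|) + D * Real.exp (max a b * |y|) := by
        gcongr <;> simp
    _ = (C + D) * Real.exp (max a b * |y|) := by ring

theorem const (c : ℂ) : HasExpGrowth fun _ => c :=
  ⟨continuous_const, ‖c‖, 0, fun y => by simp⟩

theorem ofReal : HasExpGrowth fun y => (y : ℂ) := by
  refine ⟨Complex.continuous_ofReal, 1, 1, fun y => ?_⟩
  simpa using (lt_add_one |y|).le.trans (Real.add_one_le_exp |y|)

theorem cexp_mul (z : ℂ) : HasExpGrowth fun y => Complex.exp (z * y) := by
  refine ⟨by fun_prop, 1, ‖z‖, fun y => ?_⟩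
  simpa using Complex.norm_exp_le_exp_norm (z * y)

theorem integrable_mul_gaussian (hf : HasExpGrowth f) :
    Integrable fun y : ℝ => f y * Complex.exp (-(y : ℂ) ^ 2) := by
  obtain ⟨C, a, hfC⟩ := hf.exists_norm_le
  have hC : 0 ≤ C := by simpa using (norm_nonneg _).trans (hfC 0)
  have dominant : Integrable fun y : ℝ =>
      C * Real.exp (a ^ 2 / 2) * Real.exp (-(1 / 2) * y ^ 2) :=
    (integrable_exp_neg_mul_sq (by norm_num)).const_mul _
  refine dominant.mono' (hf.continuous.mul (by fun_prop)).aestronglyMeasurable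
    (Filter.Eventually.of_forall fun y => ?_)
  have exponent_le : a * |y| + -y ^ 2 ≤ a ^ 2 / 2 + -(1 / 2) * y ^ 2 := by
    nlinarith [sq_nonneg (a - |y|), sq_abs y]
  have norm_gaussian : ‖Complex.exp (-(y : ℂ) ^ 2)‖ = Real.exp (-y ^ 2) := by
    rw [Complex.norm_exp]; norm_cast
  calc ‖f y * Complex.exp (-(y : ℂ) ^ 2)‖ ≤ C * Real.exp (a * |y|) * Real.exp (-y ^ 2) :=
        norm_mul_le_of_le (hfC y) norm_gaussian.le
    _ = C * Real.exp (a * |y| + -y ^ 2) := by rw [Real.exp_add, mul_assoc]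
    _ ≤ C * Real.exp (a ^ 2 / 2 + -(1 / 2) * y ^ 2) := by gcongr
    _ = C * Real.exp (a ^ 2 / 2) * Real.exp (-(1 / 2) * y ^ 2) := by rw [Real.exp_add, mul_assoc]

theorem memLp_two_mul_gaussian (hf : HasExpGrowth f) :
    MemLp (fun y : ℝ => f y * Complex.exp (-(y : ℂ) ^ 2 / 2)) 2 volume := by
  have continuous : Continuous fun y : ℝ => f y * Complex.exp (-(y : ℂ) ^ 2 / 2) :=
    hf.continuous.mul (by fun_prop)
  rw [memLp_two_iff_integrable_sq_norm continuous.aestronglyMeasurable]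
  refine (hf.mul hf).integrable_mul_gaussian.norm.congr (Filter.Eventually.of_forall fun y => ?_)
  simp only [← gaussian_half_mul_self, norm_mul]
  ring

end HasExpGrowth

section Hermite

theorem physHermite_zero (x : ℝ) : physHermite 0 x = 1 := by
  rw [physHermite]

theorem physHermite_one (x : ℝ) : physHermite 1 x = 2 * x := by
  rw [physHermite]

theorem physHermite_add_two (n : ℕ) (x : ℝ) :
    physHermite (n + 2) x = 2 * x * physHermite (n + 1) x - 2 * (n + 1) * physHermite n x := by
  rw [physHermite]

theorem hasExpGrowth_physHermite : ∀ n, HasExpGrowth fun y => (physHermite n y : ℂ)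
  | 0 => by simpa [physHermite_zero] using HasExpGrowth.const 1
  | 1 => by simpa [physHermite_one] using (HasExpGrowth.const 2).mul .ofReal
  | n + 2 => by
    have recurrence :=
      (((HasExpGrowth.const 2).mul .ofReal).mul (hasExpGrowth_physHermite (n + 1))).sub
        ((HasExpGrowth.const (2 * ((n : ℂ) + 1))).mul (hasExpGrowth_physHermite n))
    simpa [physHermite_add_two] using recurrence

theorem hasDerivAt_physHermite : ∀ (n : ℕ) (x : ℝ),
    HasDerivAt (physHermite n) (2 * x * physHermite n x - physHermite (n + 1) x) x
  | 0, x => by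
    simpa [physHermite_zero, physHermite_one, funext physHermite_zero]
      using hasDerivAt_const x (1 : ℝ)
  | 1, x => by
    rw [physHermite_add_two, sub_sub_cancel, funext physHermite_one]
    simpa [physHermite_zero] using (hasDerivAt_id x).const_mul (2 : ℝ)
  | n + 2, x => by
    rw [funext (physHermite_add_two n)]
    refine ((((hasDerivAt_id x).const_mul (2 : ℝ)).mul (hasDerivAt_physHermite (n + 1) x)).sub
      ((hasDerivAt_physHermite n x).const_mul (2 * ((n : ℝ) + 1)))).congr_deriv ?_
    simp only [physHermite_add_two, id_eq]
    push_cast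
    ring

theorem hasDerivAt_physHermite_succ (n : ℕ) (x : ℝ) :
    HasDerivAt (physHermite (n + 1)) (2 * (n + 1) * physHermite n x) x := by
  simpa only [physHermite_add_two, sub_sub_cancel] using hasDerivAt_physHermite (n + 1) x

theorem hasDerivAt_physHermite_mul_gaussian (n : ℕ) (y : ℝ) :
    HasDerivAt (fun y : ℝ => (physHermite n y : ℂ) * Complex.exp (-(y : ℂ) ^ 2))
      (-(physHermite (n + 1) y * Complex.exp (-(y : ℂ) ^ 2))) y := by
  have gaussian : HasDerivAt (fun y : ℝ => Complex.exp (-(y : ℂ) ^ 2))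
      (Complex.exp (-(y : ℂ) ^ 2) * (-(2 * y))) y := by
    simpa using ((Complex.ofRealCLM.hasDerivAt (x := y)).pow 2).neg.cexp
  refine ((hasDerivAt_physHermite n y).ofReal_comp.mul gaussian).congr_deriv ?_
  push_cast
  ring

theorem integral_mul_physHermite_succ_mul_gaussian {F F' : ℝ → ℂ} (hF : HasExpGrowth F)
    (hF' : HasExpGrowth F') (hderiv : ∀ y, HasDerivAt F (F' y) y) (n : ℕ) :
    ∫ y : ℝ, F y * (physHermite (n + 1) y * Complex.exp (-(y : ℂ) ^ 2))
      = ∫ y : ℝ, F' y * (physHermite n y * Complex.exp (-(y : ℂ) ^ 2)) := by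
  have integrable {G : ℝ → ℂ} (hG : HasExpGrowth G) (m : ℕ) :
      Integrable fun y : ℝ => G y * (physHermite m y * Complex.exp (-(y : ℂ) ^ 2)) := by
    simpa only [mul_assoc] using (hG.mul (hasExpGrowth_physHermite m)).integrable_mul_gaussian
  have byParts := integral_mul_deriv_eq_deriv_mul_of_integrable
    (fun y _ => hderiv y) (fun y _ => hasDerivAt_physHermite_mul_gaussian n y)
    (by simpa [Pi.mul_def] using (integrable hF (n + 1)).neg) (integrable hF' n) (integrable hF n)
  simpa only [mul_neg, integral_neg, neg_inj] using byParts

theorem integral_cexp_mul_gaussian (z : ℂ) :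
    ∫ y : ℝ, Complex.exp (z * y) * Complex.exp (-(y : ℂ) ^ 2)
      = √π * Complex.exp (z ^ 2 / 4) := by
  have sqrt_pi : (√π : ℂ) = (π / -(-1) : ℂ) ^ (1 / 2 : ℂ) := by
    rw [Real.sqrt_eq_rpow, Complex.ofReal_cpow pi_pos.le]
    simp
  have exponent : z ^ 2 / 4 = 0 - z ^ 2 / (4 * -1) := by ring
  rw [sqrt_pi, exponent, ← integral_cexp_quadratic (by simp) z 0]
  refine integral_congr_ae (Filter.Eventually.of_forall fun y => ?_)
  simp only [← Complex.exp_add]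
  ring_nf

theorem integral_cexp_mul_physHermite_mul_gaussian (z : ℂ) (n : ℕ) :
    ∫ y : ℝ, Complex.exp (z * y) * (physHermite n y * Complex.exp (-(y : ℂ) ^ 2))
      = z ^ n * (√π * Complex.exp (z ^ 2 / 4)) := by
  induction n with
  | zero => simpa [physHermite_zero] using integral_cexp_mul_gaussian z
  | succ n ih =>
    have hderiv (y : ℝ) :
        HasDerivAt (fun y : ℝ => Complex.exp (z * y)) (z * Complex.exp (z * y)) y := by
      simpa [mul_comm] using ((Complex.ofRealCLM.hasDerivAt (x := y)).const_mul z).cexp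
    rw [integral_mul_physHermite_succ_mul_gaussian (.cexp_mul z)
      ((HasExpGrowth.const z).mul (.cexp_mul z)) hderiv]
    simp_rw [mul_assoc z]
    rw [integral_const_mul, ih]
    ring

theorem integral_physHermite_mul_gaussian (n : ℕ) :
    ∫ y : ℝ, (physHermite n y : ℂ) * Complex.exp (-(y : ℂ) ^ 2)
      = if n = 0 then (√π : ℂ) else 0 := by
  simpa [zero_pow_eq] using integral_cexp_mul_physHermite_mul_gaussian 0 n

theorem integral_physHermite_mul_physHermite_mul_gaussian : ∀ m n : ℕ,
    ∫ y : ℝ, (physHermite m y : ℂ) * (physHermite n y * Complex.exp (-(y : ℂ) ^ 2))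
      = if m = n then 2 ^ n * n.factorial * (√π : ℂ) else 0
  | 0, n => by
    simp only [physHermite_zero, Complex.ofReal_one, one_mul, integral_physHermite_mul_gaussian]
    rcases n with _ | n <;> simp
  | m + 1, 0 => by
    simp [physHermite_zero, integral_physHermite_mul_gaussian]
  | m + 1, n + 1 => by
    have hderiv (y : ℝ) : HasDerivAt (fun y => (physHermite (m + 1) y : ℂ))
        (2 * ((m : ℂ) + 1) * physHermite m y) y := by
      simpa using (hasDerivAt_physHermite_succ m y).ofReal_comp
    rw [integral_mul_physHermite_succ_mul_gaussian (hasExpGrowth_physHermite _)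
      ((HasExpGrowth.const _).mul (hasExpGrowth_physHermite m)) hderiv]
    simp_rw [mul_assoc (2 * ((m : ℂ) + 1))]
    rw [integral_const_mul, integral_physHermite_mul_physHermite_mul_gaussian m n]
    rcases eq_or_ne m n with rfl | hmn
    · simp only [if_true, Nat.factorial_succ]
      push_cast
      ring
    · simp [hmn]

/-- The factor `π^{-1/4} (2^n n!)^{-1/2}` that makes the Hermite functions orthonormal. -/
def hermiteNormalization (n : ℕ) : ℝ := (√√π)⁻¹ * (√(2 ^ n * n.factorial))⁻¹

theorem hermiteNormalization_sq (n : ℕ) :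
    hermiteNormalization n ^ 2 = (2 ^ n * n.factorial * √π)⁻¹ := by
  rw [hermiteNormalization, mul_pow, inv_pow, inv_pow, Real.sq_sqrt (by positivity),
    Real.sq_sqrt (by positivity), ← mul_inv_rev]

theorem ofReal_hermiteFun (n : ℕ) (y : ℝ) : (hermiteFun n y : ℂ)
    = hermiteNormalization n * physHermite n y * Complex.exp (-(y : ℂ) ^ 2 / 2) := by
  rw [hermiteFun, ← hermiteNormalization]
  push_cast
  ring

theorem integral_hermiteFun_mul_hermiteFun (m n : ℕ) :
    ∫ y, hermiteFun m y * hermiteFun n y = if m = n then 1 else 0 := by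
  have product (y : ℝ) : ((hermiteFun m y * hermiteFun n y : ℝ) : ℂ)
      = hermiteNormalization m * hermiteNormalization n *
        (physHermite m y * (physHermite n y * Complex.exp (-(y : ℂ) ^ 2))) := by
    rw [Complex.ofReal_mul, ofReal_hermiteFun, ofReal_hermiteFun, ← gaussian_half_mul_self]
    ring
  rw [← Complex.ofReal_inj, ← integral_complex_ofReal]
  simp_rw [product]
  rw [integral_const_mul, integral_physHermite_mul_physHermite_mul_gaussian]
  rcases eq_or_ne m n with rfl | hmn
  · have normalized : hermiteNormalization m ^ 2 * (2 ^ m * m.factorial * √π) = 1 := by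
      rw [hermiteNormalization_sq, inv_mul_cancel₀ (by positivity)]
    rw [if_pos rfl, if_pos rfl, ← sq]
    exact_mod_cast normalized
  · simp [hmn]

theorem integral_scaledHermite_mul_scaledHermite {β : ℝ} (hβ : 0 < β) (m n : ℕ) :
    ∫ y, scaledHermite β m y * scaledHermite β n y = if m = n then 1 else 0 := by
  have product (y : ℝ) : scaledHermite β m y * scaledHermite β n y
      = β * (hermiteFun m (β * y) * hermiteFun n (β * y)) := by
    rw [scaledHermite, scaledHermite, mul_mul_mul_comm, Real.mul_self_sqrt hβ.le]
  simp_rw [product]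
  rw [integral_const_mul,
    Measure.integral_comp_mul_left (fun y => hermiteFun m y * hermiteFun n y) β,
    integral_hermiteFun_mul_hermiteFun, abs_of_pos (inv_pos.2 hβ), smul_eq_mul,
    mul_inv_cancel_left₀ hβ.ne']

theorem memLp_two_hermiteFun (n : ℕ) : MemLp (fun y => (hermiteFun n y : ℂ)) 2 volume := by
  simp_rw [ofReal_hermiteFun]
  exact ((HasExpGrowth.const _).mul (hasExpGrowth_physHermite n)).memLp_two_mul_gaussian

theorem memLp_two_scaledHermite {β : ℝ} (hβ : β ≠ 0) (n : ℕ) :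
    MemLp (fun y => (scaledHermite β n y : ℂ)) 2 volume := by
  have map_eq : Measure.map (β * ·) volume = ENNReal.ofReal |β⁻¹| • volume :=
    Real.map_volume_mul_left hβ
  have dilated : MemLp (fun y => (hermiteFun n (β * y) : ℂ)) 2 volume :=
    MemLp.comp_of_map (map_eq ▸ (memLp_two_hermiteFun n).smul_measure ENNReal.ofReal_ne_top)
      (by fun_prop)
  simpa [scaledHermite] using dilated.const_mul (√β : ℂ)

theorem L2norm_sub_hermiteProj_sq {β : ℝ} (hβ : 0 < β) {u : ℝ → ℂ} (hu : MemLp u 2 volume)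
    (N : ℕ) :
    L2norm (fun x => u x - hermiteProj β N u x) ^ 2
      = L2norm u ^ 2
        - ∑ n ∈ Finset.range (N + 1), ‖∫ y, u y * (scaledHermite β n y : ℂ)‖ ^ 2 := by
  have inner_scaledHermite (n : ℕ) (y : ℝ) (w : ℂ) :
      inner ℂ (scaledHermite β n y : ℂ) w = w * scaledHermite β n y := by
    rw [RCLike.inner_apply, Complex.conj_ofReal]
  have orthonormal (m n : ℕ) :
      ∫ y, inner ℂ (scaledHermite β m y : ℂ) (scaledHermite β n y : ℂ)
        = if m = n then 1 else 0 := by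
    simp_rw [inner_scaledHermite, ← Complex.ofReal_mul]
    rw [integral_complex_ofReal, integral_scaledHermite_mul_scaledHermite hβ]
    rcases eq_or_ne m n with rfl | hmn <;> simp [*, eq_comm]
  simpa only [inner_scaledHermite, hermiteProj] using
    L2norm_sub_sum_inner_mul_sq_of_orthonormal hu (memLp_two_scaledHermite hβ.ne') orthonormal
      (Finset.range (N + 1))

end Hermite

section ModulatedGaussian

variable (k s : ℝ)

theorem gks_eq (y : ℝ) : gks k s y
    = Complex.exp (-(s : ℂ) ^ 2 / 2) * Complex.exp ((s + Complex.I * k) * y)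
      * Complex.exp (-(y : ℂ) ^ 2 / 2) := by
  rw [gks, ← Complex.exp_add, ← Complex.exp_add]
  ring_nf

theorem memLp_two_gks : MemLp (gks k s) 2 volume := by
  rw [funext (gks_eq k s)]
  exact ((HasExpGrowth.const _).mul (.cexp_mul _)).memLp_two_mul_gaussian

theorem norm_gks_sq (y : ℝ) : ‖gks k s y‖ ^ 2 = Real.exp (-1 * (y - s) ^ 2) := by
  have exponent : -((y : ℂ) - s) ^ 2 / 2 + Complex.I * k * y
      = ((-(y - s) ^ 2 / 2 : ℝ) : ℂ) + ((k * y : ℝ) : ℂ) * Complex.I := by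
    push_cast
    ring
  rw [gks, exponent, Complex.exp_add, norm_mul, Complex.norm_exp_ofReal_mul_I,
    mul_one, Complex.norm_exp, Complex.ofReal_re, ← Real.exp_nat_mul]
  ring_nf

theorem L2norm_gks_sq : L2norm (gks k s) ^ 2 = √π := by
  simp_rw [L2norm_sq, norm_gks_sq]
  rw [integral_sub_right_eq_self (fun y => Real.exp (-1 * y ^ 2)) s, integral_gaussian, div_one]

theorem integral_gks_mul_hermiteFun (n : ℕ) : ∫ y, gks k s y * (hermiteFun n y : ℂ)
    = hermiteNormalization n * (s + Complex.I * k) ^ n * √π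
      * Complex.exp (-(s : ℂ) ^ 2 / 2 + (s + Complex.I * k) ^ 2 / 4) := by
  have product (y : ℝ) : gks k s y * (hermiteFun n y : ℂ)
      = (hermiteNormalization n * Complex.exp (-(s : ℂ) ^ 2 / 2)) *
        (Complex.exp ((s + Complex.I * k) * y)
          * (physHermite n y * Complex.exp (-(y : ℂ) ^ 2))) := by
    rw [gks_eq, ofReal_hermiteFun, ← gaussian_half_mul_self]
    ring
  simp_rw [product]
  rw [integral_const_mul, integral_cexp_mul_physHermite_mul_gaussian, Complex.exp_add]
  ring

theorem norm_integral_gks_mul_hermiteFun_sq (n : ℕ) :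
    ‖∫ y, gks k s y * (hermiteFun n y : ℂ)‖ ^ 2
      = √π * Real.exp (-((s ^ 2 + k ^ 2) / 2)) * (((s ^ 2 + k ^ 2) / 2) ^ n / n.factorial) := by
  have norm_base_sq : ‖(s + Complex.I * k : ℂ)‖ ^ 2 = s ^ 2 + k ^ 2 := by
    rw [mul_comm, ← Complex.normSq_eq_norm_sq, Complex.normSq_add_mul_I]
  have exponent : -(s : ℂ) ^ 2 / 2 + (s + Complex.I * k) ^ 2 / 4
      = ((-(s ^ 2 + k ^ 2) / 4 : ℝ) : ℂ) + ((s * k / 2 : ℝ) : ℂ) * Complex.I := by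
    push_cast
    linear_combination (k : ℂ) ^ 2 / 4 * Complex.I_sq
  have norm_exp_sq : ‖Complex.exp (-(s : ℂ) ^ 2 / 2 + (s + Complex.I * k) ^ 2 / 4)‖ ^ 2
      = Real.exp (-((s ^ 2 + k ^ 2) / 2)) := by
    rw [exponent, Complex.exp_add, norm_mul, Complex.norm_exp_ofReal_mul_I,
    mul_one, Complex.norm_exp, Complex.ofReal_re, ← Real.exp_nat_mul]
    ring_nf
  rw [integral_gks_mul_hermiteFun, norm_mul, norm_mul, norm_mul, mul_pow, mul_pow, mul_pow,
    norm_pow, pow_right_comm, norm_base_sq, norm_exp_sq, Complex.norm_real, Complex.norm_real,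
    norm_eq_abs, norm_eq_abs, sq_abs, sq_abs, hermiteNormalization_sq, div_pow]
  field_simp

theorem L2norm_gks_sub_hermiteProj_sq (N : ℕ) :
    L2norm (fun x => gks k s x - hermiteProj 1 N (gks k s) x) ^ 2
      = √π * Real.exp (-((s ^ 2 + k ^ 2) / 2)) * (Real.exp ((s ^ 2 + k ^ 2) / 2)
        - ∑ n ∈ Finset.range (N + 1), ((s ^ 2 + k ^ 2) / 2) ^ n / n.factorial) := by
  have scaledHermite_one (n : ℕ) (y : ℝ) : scaledHermite 1 n y = hermiteFun n y := by
    simp [scaledHermite]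
  rw [L2norm_sub_hermiteProj_sq one_pos (memLp_two_gks k s), L2norm_gks_sq]
  simp_rw [scaledHermite_one, norm_integral_gks_mul_hermiteFun_sq]
  rw [← Finset.mul_sum, mul_sub, mul_assoc (√π) _ (Real.exp _), ← Real.exp_add, neg_add_cancel,
    Real.exp_zero, mul_one]

end ModulatedGaussian

section TailBounds

theorem hasSum_exp_sub_sum_range (x : ℝ) (N : ℕ) :
    HasSum (fun n => x ^ (n + N) / (n + N).factorial)
      (Real.exp x - ∑ n ∈ Finset.range N, x ^ n / n.factorial) := by
  rw [hasSum_nat_add_iff' (f := fun n => x ^ n / n.factorial) N, Real.exp_eq_exp_ℝ]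
  exact NormedSpace.expSeries_div_hasSum_exp x

theorem exp_sub_sum_range_le_div_pow {r x : ℝ} (hr : 1 ≤ r) (hx : 0 ≤ x) (N : ℕ) :
    Real.exp x - ∑ n ∈ Finset.range N, x ^ n / n.factorial ≤ Real.exp (r * x) / r ^ N := by
  have term_le (n : ℕ) : r ^ N * (x ^ (n + N) / (n + N).factorial)
      ≤ (r * x) ^ (n + N) / (n + N).factorial := by
    rw [mul_pow, mul_div_assoc]
    gcongr
    omega
  have tail_le := hasSum_le term_le ((hasSum_exp_sub_sum_range x N).mul_left (r ^ N))
    (hasSum_exp_sub_sum_range (r * x) N)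
  have partial_sum_nonneg : 0 ≤ ∑ n ∈ Finset.range N, (r * x) ^ n / n.factorial :=
    Finset.sum_nonneg fun n _ => by positivity
  rw [le_div_iff₀' (by positivity)]
  linarith

theorem L2norm_gks_sub_hermiteProj_sq_le (k s : ℝ) {r : ℝ} (hr : 1 ≤ r) (N : ℕ) :
    L2norm (fun x => gks k s x - hermiteProj 1 N (gks k s) x) ^ 2
      ≤ √π * (Real.exp ((r - 1) * ((s ^ 2 + k ^ 2) / 2)) / r ^ (N + 1)) := by
  rw [L2norm_gks_sub_hermiteProj_sq]
  set l := (s ^ 2 + k ^ 2) / 2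
  calc √π * Real.exp (-l) * (Real.exp l - ∑ n ∈ Finset.range (N + 1), l ^ n / n.factorial)
      ≤ √π * Real.exp (-l) * (Real.exp (r * l) / r ^ (N + 1)) := by
        gcongr
        exact exp_sub_sum_range_le_div_pow hr (by positivity) (N + 1)
    _ = √π * (Real.exp ((r - 1) * l) / r ^ (N + 1)) := by
        rw [show (r - 1) * l = -l + r * l by ring, Real.exp_add]
        ring

theorem exp_eleven_sixteenths_le_two : Real.exp (11 / 16) ≤ 2 := by
  rw [← Real.le_log_iff_exp_le two_pos]
  linarith [Real.log_two_gt_d9]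

theorem L2norm_gks_sub_hermiteProj_sq_le_exp {k s : ℝ} {N : ℕ} (h : s ^ 2 + k ^ 2 ≤ 5 * N / 8) :
    L2norm (fun x => gks k s x - hermiteProj 1 N (gks k s) x) ^ 2 ≤ Real.exp (-(3 * N / 8)) := by
  have sqrt_pi_le : √π ≤ 2 := Real.sqrt_le_iff.2 ⟨two_pos.le, by linarith [Real.pi_le_four]⟩
  have exp_le_two_pow : Real.exp (11 * N / 16) ≤ 2 ^ N := by
    calc Real.exp (11 * N / 16) = Real.exp (11 / 16) ^ N := by
          rw [← Real.exp_nat_mul]; ring_nf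
      _ ≤ 2 ^ N := by gcongr; exact exp_eleven_sixteenths_le_two
  calc L2norm (fun x => gks k s x - hermiteProj 1 N (gks k s) x) ^ 2
      ≤ √π * (Real.exp ((2 - 1) * ((s ^ 2 + k ^ 2) / 2)) / 2 ^ (N + 1)) :=
        L2norm_gks_sub_hermiteProj_sq_le k s one_le_two N
    _ ≤ 2 * (Real.exp (5 * N / 16) / (2 * Real.exp (11 * N / 16))) := by
        rw [pow_succ' (2 : ℝ) N]
        gcongr
        linarith
    _ = Real.exp (-(3 * N / 8)) := by
        rw [← mul_div_assoc, mul_div_mul_left _ _ two_ne_zero, ← Real.exp_sub]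
        ring_nf

theorem norm_intervalIntegral_intervalIntegral_le {E : Type*} [NormedAddCommGroup E]
    [NormedSpace ℝ E] {a b c d C : ℝ} {f : ℝ → ℝ → E}
    (h : ∀ x ∈ Set.uIoc a b, ∀ y ∈ Set.uIoc c d, ‖f x y‖ ≤ C) :
    ‖∫ x in a..b, ∫ y in c..d, f x y‖ ≤ C * |d - c| * |b - a| :=
  intervalIntegral.norm_integral_le_of_norm_le_const fun x hx =>
    intervalIntegral.norm_integral_le_of_norm_le_const (h x hx)

theorem mul_exp_neg_le_rpow_neg_half_mul_exp {x : ℝ} (hx : 1 ≤ x) :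
    x * Real.exp (-(3 * x / 8)) ≤ 32 * x ^ (-(1 : ℝ) / 2) * Real.exp (-x / 8) := by
  have sq_le_exp : x ^ 2 ≤ 32 * Real.exp (x / 4) := by
    have := Real.quadratic_le_exp_of_nonneg (x := x / 4) (by positivity)
    nlinarith
  have inv_le_rpow : x⁻¹ ≤ x ^ (-(1 : ℝ) / 2) := by
    rw [← Real.rpow_neg_one]
    exact Real.rpow_le_rpow_of_exponent_le hx (by norm_num)
  calc x * Real.exp (-(3 * x / 8)) = x⁻¹ * x ^ 2 * Real.exp (-(3 * x / 8)) := by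
        field_simp
    _ ≤ x ^ (-(1 : ℝ) / 2) * (32 * Real.exp (x / 4)) * Real.exp (-(3 * x / 8)) := by gcongr
    _ = 32 * x ^ (-(1 : ℝ) / 2) * Real.exp (-x / 8) := by
        rw [show -x / 8 = x / 4 + -(3 * x / 8) by ring, Real.exp_add]
        ring

end TailBounds

/-- With `M = B = √N/(2√2)` and `Ω = {(k,s) : |k| ≤ B, |s| ≤ 2M}`,
`∫_Ω ‖g_{k,s} − Π̂_N g_{k,s}‖² dk ds ≤ C N^{-1/2} e^{-N/8}`. -/
theorem gks_proj_error_integral :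
    ∃ C : ℝ, 0 < C ∧ ∀ N : ℕ, 1 ≤ N →
      (∫ k in (-(Real.sqrt N / (2 * Real.sqrt 2)))..(Real.sqrt N / (2 * Real.sqrt 2)),
        ∫ s in (-(2 * (Real.sqrt N / (2 * Real.sqrt 2))))..(2 * (Real.sqrt N / (2 * Real.sqrt 2))),
          (L2norm (fun x => gks k s x - hermiteProj 1 N (gks k s) x)) ^ 2)
        ≤ C * (N : ℝ) ^ (-(1 : ℝ) / 2) * Real.exp (-(N : ℝ) / 8) := by
  refine ⟨32, by norm_num, fun N hN => ?_⟩
  set B := √(N : ℝ) / (2 * √2) with hB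
  have hB_sq : B ^ 2 = N / 8 := by
    rw [hB, div_pow, mul_pow, Real.sq_sqrt (by positivity), Real.sq_sqrt (by positivity)]
    norm_num
  have sq_le {b x : ℝ} (hb : 0 ≤ b) (hx : x ∈ Set.uIoc (-b) b) : x ^ 2 ≤ b ^ 2 := by
    rw [Set.uIoc_of_le (neg_le_self hb)] at hx
    exact sq_le_sq' hx.1.le hx.2
  have error_le : ∀ k ∈ Set.uIoc (-B) B, ∀ s ∈ Set.uIoc (-(2 * B)) (2 * B),
      ‖L2norm (fun x => gks k s x - hermiteProj 1 N (gks k s) x) ^ 2‖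
        ≤ Real.exp (-(3 * N / 8)) := fun k hk s hs => by
    rw [Real.norm_of_nonneg (by positivity)]
    apply L2norm_gks_sub_hermiteProj_sq_le_exp
    linarith [sq_le (by positivity) hk, sq_le (by positivity) hs]
  have area : |2 * B - -(2 * B)| * |B - -B| = N := by
    rw [← abs_mul, show (2 * B - -(2 * B)) * (B - -B) = N by linarith, Nat.abs_cast]
  calc _ ≤ Real.exp (-(3 * N / 8)) * |2 * B - -(2 * B)| * |B - -B| :=
        (le_abs_self _).trans (norm_intervalIntegral_intervalIntegral_le error_le)
    _ = N * Real.exp (-(3 * N / 8)) := by rw [mul_assoc, area, mul_comm]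
    _ ≤ 32 * (N : ℝ) ^ (-(1 : ℝ) / 2) * Real.exp (-(N : ℝ) / 8) :=
        mul_exp_neg_le_rpow_neg_half_mul_exp (by exact_mod_cast hN)
end
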